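/- Let x be a rational number whose numerator (in lowest terms) is odd and whose denominator is even, and let k(x) be the least natural number t such that T^[t](x) is an integer. Then the final c-series term, the integer T^[k(x)](x), is even, and the index k(x) is odd. -/

import Mathlib

/-- The even-rounded floor `c(x)`: equal to `x` if `x` is an integer; otherwise
`⌊x⌋` if `⌊x⌋` is even and `⌊x⌋ + 1` if `⌊x⌋` is odd. -/
noncomputable def evenFloor (x : ℚ) : ℤ :=
  if x.den = 1 then x.num
  else if Even ⌊x⌋ then ⌊x⌋ else ⌊x⌋ + 1

/-- The step map of the even continued fraction (c-series) expansion: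
`T x = (x - c x)⁻¹` if `x` is not an integer, and `T x = 0` otherwise. -/
noncomputable def stepMap (x : ℚ) : ℚ :=
  if x.den = 1 then 0 else (x - evenFloor x)⁻¹

/-!
Modulo 2, subtracting an even integer from `x` changes neither the numerator nor the denominator,
while inversion swaps them; hence every step from a non-integer swaps the two parities. From
(odd, even) one is at (odd, even) after an even number of steps and at (even, odd) after an odd
number, and only the latter is compatible with the denominator being `1`. An integer is reached
because `|x - c(x)| < 1` makes the denominators decrease.
-/

/-- The residues modulo 2 of the numerator and the denominator of `x` in lowest terms, paired so
that inverting `x` becomes `Prod.swap`. -/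
def parityPair (x : ℚ) : ZMod 2 × ZMod 2 := (x.num, x.den)

theorem num_sub_intCast (x : ℚ) (c : ℤ) : (x - c).num = x.num - c * x.den := by
  have num_cast : ((x - c).num : ℚ) = x.num - c * x.den := by
    rw [← Rat.mul_den_eq_num (x - c), Rat.sub_intCast_den, sub_mul, Rat.mul_den_eq_num]
  exact_mod_cast num_cast

theorem natAbs_num_lt_den_iff {x : ℚ} : x.num.natAbs < x.den ↔ |x| < 1 := by
  rw [← Rat.num_lt_denom_iff, Rat.num_abs_eq_abs_num, Rat.den_abs_eq_den,
    ← Int.natCast_natAbs, Nat.cast_lt]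

theorem parityPair_sub_intCast {c : ℤ} (hc : Even c) (x : ℚ) :
    parityPair (x - c) = parityPair x := by
  simp [parityPair, num_sub_intCast, hc.intCast_zmod_two]

theorem parityPair_inv {x : ℚ} (hx : x ≠ 0) : parityPair x⁻¹ = (parityPair x).swap := by
  have sign_odd : (x.num.sign : ZMod 2) = 1 := by
    rcases hx.lt_or_gt with hneg | hpos
    · rw [Int.sign_eq_neg_one_of_neg (Rat.num_neg.2 hneg)]
      decide
    · rw [Int.sign_eq_one_of_pos (Rat.num_pos.2 hpos), Int.cast_one]
  simp [parityPair, Rat.den_inv_of_ne_zero hx, sign_odd]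

theorem sub_intCast_ne_zero_of_den_ne_one {x : ℚ} (hx : x.den ≠ 1) (c : ℤ) : x - c ≠ 0 := by
  intro h
  rw [sub_eq_zero.1 h] at hx
  exact hx (Rat.den_intCast c)

theorem even_evenFloor {x : ℚ} (hx : x.den ≠ 1) : Even (evenFloor x) := by
  rw [evenFloor, if_neg hx]
  split_ifs with hfloor
  · exact hfloor
  · exact (Int.not_even_iff_odd.1 hfloor).add_one

theorem abs_sub_evenFloor_lt_one (x : ℚ) : |x - evenFloor x| < 1 := by
  unfold evenFloor
  split_ifs with hint hfloor
  · simp [(Rat.den_eq_one_iff x).1 hint]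
  · rw [Int.self_sub_floor, Int.abs_fract]
    exact Int.fract_lt_one x
  · have fract_pos : 0 < Int.fract x :=
      (Int.fract_nonneg x).lt_of_ne' (sub_intCast_ne_zero_of_den_ne_one hint ⌊x⌋)
    have sub_eq : x - (⌊x⌋ + 1 : ℤ) = Int.fract x - 1 := by
      rw [Int.fract]
      push_cast
      ring
    rw [sub_eq, abs_lt]
    constructor <;> linarith [Int.fract_lt_one x]

theorem stepMap_of_den_ne_one {x : ℚ} (hx : x.den ≠ 1) : stepMap x = (x - evenFloor x)⁻¹ :=
  if_neg hx

theorem den_stepMap_lt {x : ℚ} (hx : x.den ≠ 1) : (stepMap x).den < x.den := by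
  rw [stepMap_of_den_ne_one hx, Rat.den_inv_of_ne_zero (sub_intCast_ne_zero_of_den_ne_one hx _)]
  simpa only [Rat.sub_intCast_den] using natAbs_num_lt_den_iff.2 (abs_sub_evenFloor_lt_one x)

theorem parityPair_stepMap {x : ℚ} (hx : x.den ≠ 1) :
    parityPair (stepMap x) = (parityPair x).swap := by
  rw [stepMap_of_den_ne_one hx, parityPair_inv (sub_intCast_ne_zero_of_den_ne_one hx _),
    parityPair_sub_intCast (even_evenFloor hx)]

theorem parityPair_iterate_stepMap {x : ℚ} {t : ℕ} (hx : ∀ s < t, (stepMap^[s] x).den ≠ 1) :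
    parityPair (stepMap^[t] x) = Prod.swap^[t] (parityPair x) := by
  induction t with
  | zero => rfl
  | succ t ih =>
    rw [Function.iterate_succ_apply', Function.iterate_succ_apply',
      parityPair_stepMap (hx t t.lt_succ_self), ih fun s hs => hx s (hs.trans t.lt_succ_self)]

theorem exists_den_iterate_stepMap_eq_one (x : ℚ) : ∃ t, (stepMap^[t] x).den = 1 := by
  by_cases hx : x.den = 1
  · exact ⟨0, hx⟩
  · obtain ⟨t, ht⟩ := exists_den_iterate_stepMap_eq_one (stepMap x)
    exact ⟨t + 1, ht⟩
termination_by x.den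
decreasing_by exact den_stepMap_lt hx

/-- If `x.num` is odd and `x.den` is even, then with `k x` the least `t` with
`T^[t] x` an integer, the final c-series term (the integer `T^[k x] x`) is even,
and `k x` is odd. -/
theorem final_term_even_of_odd_even (x : ℚ) (hnum : Odd x.num) (hden : Even x.den)
    (k : ℕ) (hk : k = sInf {t : ℕ | (stepMap^[t] x).den = 1}) :
    Even (stepMap^[k] x).num ∧ Odd k := by
  have den_last : (stepMap^[k] x).den = 1 := hk ▸ Nat.sInf_mem (exists_den_iterate_stepMap_eq_one x)
  have den_before : ∀ s < k, (stepMap^[s] x).den ≠ 1 := fun s hs den_eq =>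
    hs.not_ge (hk.trans_le (Nat.sInf_le den_eq))
  have parity_start : parityPair x = (1, 0) :=
    Prod.ext hnum.intCast_zmod_two hden.natCast_zmod_two
  have parity_last : (((stepMap^[k] x).num : ZMod 2), (1 : ZMod 2)) = Prod.swap^[k] (1, 0) := by
    rw [← parity_start, ← parityPair_iterate_stepMap den_before, parityPair, den_last, Nat.cast_one]
  have swap_involutive : Function.Involutive (Prod.swap : ZMod 2 × ZMod 2 → _) := Prod.swap_swap
  rcases Nat.even_or_odd k with hk_even | hk_odd
  · rw [swap_involutive.iterate_even hk_even] at parity_last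
    exact absurd (congrArg Prod.snd parity_last) one_ne_zero
  · rw [swap_involutive.iterate_odd hk_odd] at parity_last
    exact ⟨ZMod.intCast_eq_zero_iff_even.1 (congrArg Prod.fst parity_last), hk_odd⟩
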